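/- Let q be a prime power and F a finite field containing 𝔽_q with [F : 𝔽_q] = d. Let z ∈ F, r ≥ 1, and φ_T(X) = zX + g₁X^q + ⋯ + g_rX^{q^r} ∈ F[X] with g_r ≠ 0. Let p ∈ 𝔽_q[T] be the minimal polynomial of z over 𝔽_q and m = deg p (so m divides d). Let M be the r×r matrix over F[T] with M_{i,i+1} = 1 for 1 ≤ i ≤ r−1, last row ((T−z)/g_r, −g₁/g_r, …, −g_{r−1}/g_r), and all other entries 0; for k ≥ 0 let M^{(k)} be obtained from M by raising every F-coefficient of every entry to the q^k-th power (leaving T fixed), and set N = M^{(d−1)}·M^{(d−2)}·⋯·M^{(1)}·M. Write the characteristic polynomial of N as χ(X) = det(X·I_r − N) = X^r + a_{r−1}X^{r−1} + ⋯ + a_1X + a_0 with a_i ∈ F[T]. Then: (1) every a_i lies in the image of 𝔽_q[T] in F[T]; (2) for every i with 0 < i < r, the degree in T of a_i is at most (r−i)·d/r; and (3) a_0 = (−1)^{rd−d−r} · p^{d/m} / N_{F/𝔽_q}(g_r), where N_{F/𝔽_q} : F → 𝔽_q is the field norm. -/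

import Mathlib

/-- The matrix of the semilinear operator `τ` on the Anderson motive `𝐌(φ)` of the Drinfeld
module `φ_T = z + g₁τ + ⋯ + g_rτ^r`, in the canonical basis `(1, τ, …, τ^{r-1})`:
superdiagonal entries `1`, last row `((T−z)/g_r, −g₁/g_r, …, −g_{r−1}/g_r)`, zeros elsewhere. -/
noncomputable def motiveMatrix (F : Type*) [Field F] (r : ℕ) (z : F) (g : ℕ → F) :
    Matrix (Fin r) (Fin r) (Polynomial F) :=
  Matrix.of fun i j =>
    if (i : ℕ) + 1 = (j : ℕ) then 1
    else if (i : ℕ) = r - 1 then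
      (if (j : ℕ) = 0 then (Polynomial.X - Polynomial.C z) * Polynomial.C (g r)⁻¹
       else Polynomial.C (-(g (j : ℕ)) * (g r)⁻¹))
    else 0

/-- Raising every coefficient of a polynomial to the `e`-th power. -/
noncomputable def coeffPow (F : Type*) [Field F] (e : ℕ) (P : Polynomial F) : Polynomial F :=
  P.sum fun n a => Polynomial.C (a ^ e) * Polynomial.X ^ n

/-- The Frobenius matrix `N = M^{(d−1)}·M^{(d−2)}·⋯·M^{(1)}·M`, where `M^{(k)}` is obtained
from the motive matrix `M` by raising every `F`-coefficient of every entry to the `q^k`-th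
power: the matrix of the Frobenius endomorphism `τ^d` acting on the Anderson motive. -/
noncomputable def frobeniusMatrix (F : Type*) [Field F] (q r d : ℕ) (z : F) (g : ℕ → F) :
    Matrix (Fin r) (Fin r) (Polynomial F) :=
  (((List.range d).reverse).map fun k =>
    (motiveMatrix F r z g).map (coeffPow F (q ^ k))).prod

/-!
The operator `τ` is Frobenius-semilinear with matrix `M`, so `N` is the matrix of `τ^d`. Since the
`d`-fold Frobenius twist of `M` is `M` itself, the twist of `N` is a cyclic rearrangement of the
factors of `N`; hence `χ` is fixed by Frobenius and has coefficients in `𝔽_q[T]`. If `T` has weight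
`r` and the basis vector `τ^i` has weight `i`, then `τ` has weight `1` and `N` has weight `d`, so
the coefficient of `X^i` in `χ` has weight at most `(r - i)d`, which bounds its degree in `T`.
Finally, `det M = (-1)^(r-1) (T - z) / g_r`, so `det N` is up to sign the product of the conjugates
of `T - z`, a power of the minimal polynomial of `z`, divided by the norm of `g_r`.
-/

open Polynomial

section TwistedPow

/-- The `n`-th power `φ^{n-1}(a) ⋯ φ(a) a` of `a` twisted by the self-map `φ`: if an operator `τ`
is `φ`-semilinear with matrix `a`, this is the matrix of `τ^n`. -/
def twistedPow {A : Type*} [Monoid A] (φ : A → A) (a : A) (n : ℕ) : A :=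
  ((List.range n).reverse.map fun k => φ^[k] a).prod

variable {A B Φ : Type*} [Monoid A]

@[simp]
theorem twistedPow_zero (φ : A → A) (a : A) : twistedPow φ a 0 = 1 := by
  simp [twistedPow]

theorem twistedPow_succ (φ : A → A) (a : A) (n : ℕ) :
    twistedPow φ a (n + 1) = φ^[n] a * twistedPow φ a n := by
  simp [twistedPow, List.range_succ]

theorem twistedPow_succ' [FunLike Φ A A] [MonoidHomClass Φ A A] (φ : Φ) (a : A) (n : ℕ) :
    twistedPow φ a (n + 1) = φ (twistedPow φ a n) * a := by
  induction n with
  | zero => simp [twistedPow_succ]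
  | succ n ih =>
    rw [twistedPow_succ, Function.iterate_succ_apply', ih, ← mul_assoc, ← map_mul,
      ← twistedPow_succ, ih]

theorem map_twistedPow_eq_prod [CommMonoid B] [FunLike Φ A B] [MonoidHomClass Φ A B] (f : Φ)
    (φ : A → A) (a : A) (n : ℕ) :
    f (twistedPow φ a n) = ∏ k ∈ Finset.range n, f (φ^[k] a) := by
  induction n with
  | zero => simp
  | succ n ih => rw [twistedPow_succ, map_mul, ih, Finset.prod_range_succ, mul_comm]

theorem twistedPow_mem_graded {ι S : Type*} [AddMonoid ι] [SetLike S A] (𝓐 : ι → S)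
    [SetLike.GradedMonoid 𝓐] {φ : A → A} {a : A} {w : ι} (h : ∀ k, φ^[k] a ∈ 𝓐 w) (n : ℕ) :
    twistedPow φ a n ∈ 𝓐 (n • w) := by
  simpa [twistedPow] using
    SetLike.list_prod_map_mem_graded (A := 𝓐) (List.range n).reverse (fun _ => w) _ fun k _ => h k

-- Moving one factor around the product turns it into its own twist.
theorem map_charpoly_twistedPow {R n : Type*} [CommRing R] [Fintype n] [DecidableEq n]
    (σ : R →+* R) (M : Matrix n n R) {d : ℕ} (hM : σ.mapMatrix^[d] M = M) :
    (twistedPow σ.mapMatrix M d).charpoly.map σ = (twistedPow σ.mapMatrix M d).charpoly := by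
  rw [← Matrix.charpoly_map, ← RingHom.mapMatrix_apply]
  cases d with
  | zero => simp
  | succ d =>
    calc (σ.mapMatrix (twistedPow σ.mapMatrix M (d + 1))).charpoly
      _ = (M * σ.mapMatrix (twistedPow σ.mapMatrix M d)).charpoly := by
        rw [twistedPow_succ, map_mul, ← Function.iterate_succ_apply' σ.mapMatrix, hM]
      _ = (twistedPow σ.mapMatrix M (d + 1)).charpoly := by
        rw [Matrix.charpoly_mul_comm, twistedPow_succ']

end TwistedPow

section Weights

variable {ι R : Type*} [AddCommGroup ι]

/-- The grading or filtration of `R[X]` induced by one of `R` when `X` is given weight `d`. -/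
def polynomialWeight [Ring R] (𝓕 : ι → AddSubgroup R) (d w : ι) : AddSubgroup R[X] where
  carrier := {P | ∀ k, P.coeff k ∈ 𝓕 (w - k • d)}
  zero_mem' k := by simp
  add_mem' hP hQ k := by simpa using add_mem (hP k) (hQ k)
  neg_mem' hP k := by simpa using hP k

/-- The grading or filtration of square matrices over `R` induced by one of `R` when the `i`-th
basis vector is given weight `u i`. -/
def matrixWeight {n : Type*} [Ring R] (𝓕 : ι → AddSubgroup R) (u : n → ι) (w : ι) :
    AddSubgroup (Matrix n n R) where
  carrier := {M | ∀ i j, M i j ∈ 𝓕 (w + u i - u j)}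
  zero_mem' i j := by simp
  add_mem' hM hN i j := add_mem (hM i j) (hN i j)
  neg_mem' hM i j := neg_mem (hM i j)

/-- The filtration of a ring in which every element has weight `0`. -/
def trivialWeight (R ι : Type*) [Ring R] [LE ι] [Zero ι] (w : ι) : AddSubgroup R where
  carrier := {a | a ≠ 0 → 0 ≤ w}
  zero_mem' h := absurd rfl h
  add_mem' ha hb h := by
    by_contra hw
    simp_all
  neg_mem' ha h := ha (neg_ne_zero.mp h)

instance [Ring R] (𝓕 : ι → AddSubgroup R) [SetLike.GradedMonoid 𝓕] (d : ι) :
    SetLike.GradedMonoid (polynomialWeight 𝓕 d) where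
  one_mem k := by
    rw [coeff_one]
    split_ifs with hk
    · simpa [hk] using SetLike.one_mem_graded 𝓕
    · exact zero_mem _
  mul_mem v w P Q hP hQ k := by
    rw [coeff_mul]
    refine sum_mem fun ij hij => ?_
    convert SetLike.mul_mem_graded (hP ij.1) (hQ ij.2) using 2
    rw [← Finset.HasAntidiagonal.mem_antidiagonal.mp hij, add_smul]
    abel

instance {n : Type*} [Ring R] [Fintype n] [DecidableEq n] (𝓕 : ι → AddSubgroup R)
    [SetLike.GradedMonoid 𝓕] (u : n → ι) : SetLike.GradedMonoid (matrixWeight 𝓕 u) where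
  one_mem i j := by
    rw [Matrix.one_apply]
    split_ifs with hij
    · simpa [hij] using SetLike.one_mem_graded 𝓕
    · exact zero_mem _
  mul_mem v w M N hM hN i j := by
    rw [Matrix.mul_apply]
    refine sum_mem fun k _ => ?_
    convert SetLike.mul_mem_graded (hM i k) (hN k j) using 2
    abel

instance [Ring R] [PartialOrder ι] [IsOrderedAddMonoid ι] :
    SetLike.GradedMonoid (trivialWeight R ι) where
  one_mem _ := le_rfl
  mul_mem _ _ _ _ ha hb h :=
    add_nonneg (ha (left_ne_zero_of_mul h)) (hb (right_ne_zero_of_mul h))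

theorem C_mem_polynomialWeight [Ring R] {𝓕 : ι → AddSubgroup R} (d : ι) {w : ι} {a : R}
    (ha : a ∈ 𝓕 w) : C a ∈ polynomialWeight 𝓕 d w := by
  intro k
  rw [coeff_C]
  split_ifs with hk
  · simpa [hk] using ha
  · exact zero_mem _

theorem X_mem_polynomialWeight [Ring R] (𝓕 : ι → AddSubgroup R) [SetLike.GradedMonoid 𝓕] (d : ι) :
    X ∈ polynomialWeight 𝓕 d d := by
  intro k
  rw [coeff_X]
  split_ifs with hk
  · simpa [← hk] using SetLike.one_mem_graded 𝓕
  · exact zero_mem _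

-- The weights of the basis vectors cancel along every permutation.
theorem det_mem_of_mem_matrixWeight {n : Type*} [CommRing R] [Fintype n] [DecidableEq n]
    {𝓕 : ι → AddSubgroup R} [SetLike.GradedMonoid 𝓕] {u : n → ι} {w : ι} {M : Matrix n n R}
    (hM : M ∈ matrixWeight 𝓕 u w) : M.det ∈ 𝓕 (Fintype.card n • w) := by
  rw [Matrix.det_apply]
  refine sum_mem fun σ _ => zsmul_mem ?_ _
  have hw : ∑ i, (w + u (σ i) - u i) = Fintype.card n • w := by
    simp [Finset.sum_sub_distrib, Finset.sum_add_distrib, Equiv.sum_comp σ u]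
  exact hw ▸ SetLike.prod_mem_graded 𝓕 _ _ fun i _ => hM (σ i) i

theorem charmatrix_mem_matrixWeight {n : Type*} [CommRing R] [Fintype n] [DecidableEq n]
    {𝓕 : ι → AddSubgroup R} [SetLike.GradedMonoid 𝓕] {u : n → ι} {w : ι} {M : Matrix n n R}
    (hM : M ∈ matrixWeight 𝓕 u w) : M.charmatrix ∈ matrixWeight (polynomialWeight 𝓕 w) u w := by
  intro i j
  rw [Matrix.charmatrix_apply, Matrix.diagonal_apply]
  refine sub_mem ?_ (C_mem_polynomialWeight w (hM i j))
  split_ifs with hij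
  · simpa [hij] using X_mem_polynomialWeight 𝓕 w
  · exact zero_mem _

theorem charpoly_coeff_mem_of_mem_matrixWeight {n : Type*} [CommRing R] [Fintype n] [DecidableEq n]
    {𝓕 : ι → AddSubgroup R} [SetLike.GradedMonoid 𝓕] {u : n → ι} {w : ι} {M : Matrix n n R}
    (hM : M ∈ matrixWeight 𝓕 u w) (k : ℕ) :
    M.charpoly.coeff k ∈ 𝓕 (Fintype.card n • w - k • w) :=
  det_mem_of_mem_matrixWeight (charmatrix_mem_matrixWeight hM) k

theorem natDegree_nsmul_le_of_mem_polynomialWeight [Ring R] [PartialOrder ι] [IsOrderedAddMonoid ι]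
    {d w : ι} {P : R[X]} (hP : P ∈ polynomialWeight (trivialWeight R ι) d w) (hP0 : P ≠ 0) :
    P.natDegree • d ≤ w :=
  sub_nonneg.mp (hP _ (leadingCoeff_ne_zero.mpr hP0))

end Weights

section FiniteFields

variable {K L : Type*} [Field K] [Field L] [Algebra K L]

theorem mem_range_algebraMap_of_pow_card_eq_self [Fintype K] {x : L}
    (hx : x ^ Fintype.card K = x) : x ∈ Set.range (algebraMap K L) := by
  have hsplits : (X ^ Fintype.card K - X : K[X]).Splits := by
    simpa using (FiniteField.isSplittingField_sub K K).splits
  refine hsplits.mem_range_of_isRoot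
    (FiniteField.X_pow_card_sub_X_ne_zero K Fintype.one_lt_card) ?_
  simp [hx]

theorem mem_lifts_of_map_frobenius_eq_self [Fintype K] {P : L[X]}
    (hP : P.map (FiniteField.frobeniusAlgHom K L : L →+* L) = P) :
    P ∈ lifts (algebraMap K L) :=
  (lifts_iff_coeff_lifts P).mpr fun n =>
    mem_range_algebraMap_of_pow_card_eq_self (by simpa using congr_arg (coeff · n) hP)

theorem prod_gal_X_sub_C_eq_map_minpoly_pow [FiniteDimensional K L] [IsGalois K L] (z : L) :
    ∏ σ : Gal(L/K), (X - C (σ z)) =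
      (minpoly K z ^ (Module.finrank K L / (minpoly K z).natDegree)).map (algebraMap K L) := by
  have hz : IsIntegral K z := Algebra.IsIntegral.isIntegral z
  obtain ⟨b, hb, hb_deg, hb_monic⟩ := lifts_and_natDegree_eq_and_monic
    (Algebra.IsInvariant.charpoly_mem_lifts K L Gal(L/K) z) (MulSemiringAction.monic_charpoly _ z)
  have hdeg : b.natDegree = Module.finrank K L := by
    rw [hb_deg, MulSemiringAction.charpoly_eq,
      natDegree_prod_of_monic _ _ fun σ _ => monic_X_sub_C _]
    simp [← Nat.card_eq_fintype_card, IsGalois.card_aut_eq_finrank]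
  -- Every root of `b` is a conjugate of `z`, so `b` has no prime factor other than `minpoly K z`.
  have hdvd : b ∣ minpoly K z ^ Fintype.card Gal(L/K) := by
    rw [← map_dvd_map' (algebraMap K L), hb, Polynomial.map_pow, ← Finset.card_univ,
      ← Finset.prod_const]
    refine Finset.prod_dvd_prod_of_dvd _ _ fun σ _ => ?_
    rw [dvd_iff_isRoot, IsRoot.def, eval_map_algebraMap, AlgEquiv.smul_def,
      ← minpoly.algEquiv_eq σ z, minpoly.aeval]
  obtain ⟨i, -, hi⟩ := (dvd_prime_pow (minpoly.prime hz) _).mp hdvd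
  obtain rfl := eq_of_monic_of_associated hb_monic ((minpoly.monic hz).pow i) hi
  rw [← hdeg, natDegree_pow, Nat.mul_div_cancel _ (minpoly.natDegree_pos hz), hb]
  rfl

theorem prod_range_X_sub_C_pow_eq_map_minpoly_pow [Fintype K] [FiniteDimensional K L] (z : L) :
    ∏ k ∈ Finset.range (Module.finrank K L), (X - C (z ^ Fintype.card K ^ k)) =
      (minpoly K z ^ (Module.finrank K L / (minpoly K z).natDegree)).map (algebraMap K L) := by
  have : Finite L := Module.finite_of_finite K
  rw [← prod_gal_X_sub_C_eq_map_minpoly_pow, Finset.prod_range]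
  exact Fintype.prod_bijective _ (FiniteField.bijective_frobeniusAlgEquivOfAlgebraic_pow K L) _ _
    fun k => by rw [AlgEquiv.coe_pow, FiniteField.coe_frobeniusAlgEquivOfAlgebraic_iterate]

end FiniteFields

section MotiveMatrix

variable {F : Type*} [Field F]

theorem coeffPow_eq_map {e : ℕ} {σ : F →+* F} (hσ : ∀ x, σ x = x ^ e) (P : F[X]) :
    coeffPow F e P = P.map σ := by
  simp [coeffPow, Polynomial.map, eval₂_eq_sum, hσ]

theorem mapMatrix_motiveMatrix {K : Type*} [Field K] (σ : F →+* K) (r : ℕ) (z : F) (g : ℕ → F) :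
    (mapRingHom σ).mapMatrix (motiveMatrix F r z g) = motiveMatrix K r (σ z) (σ ∘ g) := by
  ext1 i j
  simp only [RingHom.mapMatrix_apply, Matrix.map_apply, motiveMatrix, Matrix.of_apply]
  split_ifs <;> simp

theorem map_coeffPow_motiveMatrix {e : ℕ} {σ : F →+* F} (hσ : ∀ x, σ x = x ^ e) (r : ℕ) (z : F)
    (g : ℕ → F) :
    (motiveMatrix F r z g).map (coeffPow F e) = motiveMatrix F r (z ^ e) fun i => g i ^ e := by
  have hmap : coeffPow F e = mapRingHom σ := funext (coeffPow_eq_map hσ)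
  simpa only [hmap, RingHom.mapMatrix_apply, hσ, Function.comp_def] using
    mapMatrix_motiveMatrix σ r z g

theorem det_motiveMatrix {r : ℕ} (hr : 1 ≤ r) (z : F) (g : ℕ → F) :
    (motiveMatrix F r z g).det = C ((-1) ^ (r - 1) * (g r)⁻¹) * (X - C z) := by
  obtain ⟨n, rfl⟩ := Nat.exists_eq_add_of_le' hr
  have hminor : (motiveMatrix F (n + 1) z g).submatrix (Fin.last n).succAbove Fin.succ = 1 := by
    ext1 i j
    rcases eq_or_ne i j with rfl | hij
    · simp [motiveMatrix]
    · simp [motiveMatrix, hij, Fin.val_ne_of_ne hij, i.2.ne]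
  rw [Matrix.det_succ_column_zero, Finset.sum_eq_single (Fin.last n), hminor]
  · simp [motiveMatrix, mul_comm, mul_assoc]
  · intro i _ hi
    have hin : (i : ℕ) ≠ n := fun h => hi (Fin.ext h)
    simp [motiveMatrix, hin]
  · simp

/-- The filtration of endomorphisms of the Anderson motive of rank `r` in which `T` has weight `r`
and the basis vector `τ^i` has weight `i`, so that `τ` has weight `1`. -/
noncomputable abbrev motiveWeight (F : Type*) [Field F] (r : ℕ) (w : ℤ) :
    AddSubgroup (Matrix (Fin r) (Fin r) F[X]) :=
  matrixWeight (polynomialWeight (trivialWeight F ℤ) r) (fun i => ((i : ℕ) : ℤ)) w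

theorem motiveMatrix_mem_motiveWeight (r : ℕ) (z : F) (g : ℕ → F) :
    motiveMatrix F r z g ∈ motiveWeight F r 1 := by
  have hC (a : F) {w : ℤ} (hw : 0 ≤ w) : C a ∈ polynomialWeight (trivialWeight F ℤ) (r : ℤ) w :=
    C_mem_polynomialWeight _ fun _ => hw
  intro i j
  simp only [motiveMatrix, Matrix.of_apply]
  split_ifs with hij hi hj
  · exact hC 1 (by omega)
  · have hT : (X - C z) * C (g r)⁻¹ ∈ polynomialWeight (trivialWeight F ℤ) (r : ℤ) (r + 0) :=
      SetLike.mul_mem_graded (sub_mem (X_mem_polynomialWeight _ _) (hC z (by omega)))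
        (hC _ le_rfl)
    convert hT using 2
    omega
  · exact hC _ (by omega)
  · exact zero_mem _

end MotiveMatrix

section FrobeniusMatrix

variable (K F : Type*) [Field K] [Fintype K] [Field F] [Algebra K F]

/-- The `q`-power Frobenius on the coefficients of polynomials over an extension of `𝔽_q`; it is
`coeffPow F q` as a ring homomorphism. -/
noncomputable abbrev coeffFrobenius : F[X] →+* F[X] :=
  mapRingHom (FiniteField.frobeniusAlgHom K F : F →+* F)

variable {F} (r : ℕ) (z : F) (g : ℕ → F)

theorem iterate_coeffFrobenius_motiveMatrix (k : ℕ) :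
    (coeffFrobenius K F).mapMatrix^[k] (motiveMatrix F r z g) =
      motiveMatrix F r (z ^ Fintype.card K ^ k) fun i => g i ^ Fintype.card K ^ k := by
  induction k with
  | zero => simp
  | succ k ih =>
    rw [Function.iterate_succ_apply', ih, mapMatrix_motiveMatrix]
    simp [pow_succ, pow_mul, Function.comp_def]

theorem iterate_finrank_coeffFrobenius_motiveMatrix [FiniteDimensional K F] :
    (coeffFrobenius K F).mapMatrix^[Module.finrank K F] (motiveMatrix F r z g) =
      motiveMatrix F r z g := by
  have : Finite F := Module.finite_of_finite K
  have := Fintype.ofFinite F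
  simp [iterate_coeffFrobenius_motiveMatrix, ← Module.card_eq_pow_finrank, FiniteField.pow_card]

theorem frobeniusMatrix_eq_twistedPow (d : ℕ) :
    frobeniusMatrix F (Fintype.card K) r d z g =
      twistedPow (coeffFrobenius K F).mapMatrix (motiveMatrix F r z g) d := by
  have hσ (k : ℕ) (x : F) : ((FiniteField.frobeniusAlgHom K F ^ k : F →ₐ[K] F) : F →+* F) x =
      x ^ Fintype.card K ^ k := by
    simp [AlgHom.coe_pow, FiniteField.coe_frobeniusAlgHom, pow_iterate]
  simp only [frobeniusMatrix, twistedPow, map_coeffPow_motiveMatrix (hσ _),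
    iterate_coeffFrobenius_motiveMatrix]

theorem charpoly_frobeniusMatrix_coeff_mem_lifts [FiniteDimensional K F] (i : ℕ) :
    (frobeniusMatrix F (Fintype.card K) r (Module.finrank K F) z g).charpoly.coeff i ∈
      lifts (algebraMap K F) := by
  apply mem_lifts_of_map_frobenius_eq_self
  have h := map_charpoly_twistedPow _ _ (iterate_finrank_coeffFrobenius_motiveMatrix K r z g)
  simpa [frobeniusMatrix_eq_twistedPow] using congr_arg (coeff · i) h

theorem frobeniusMatrix_mem_motiveWeight (d : ℕ) :
    frobeniusMatrix F (Fintype.card K) r d z g ∈ motiveWeight F r d := by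
  have hM (k : ℕ) :
      (coeffFrobenius K F).mapMatrix^[k] (motiveMatrix F r z g) ∈ motiveWeight F r 1 := by
    rw [iterate_coeffFrobenius_motiveMatrix]
    exact motiveMatrix_mem_motiveWeight r _ _
  rw [frobeniusMatrix_eq_twistedPow, ← nsmul_one]
  exact twistedPow_mem_graded (motiveWeight F r) hM d

theorem natDegree_charpoly_frobeniusMatrix_coeff_le (d : ℕ) {i : ℕ} (hi : i ≤ r) :
    r * ((frobeniusMatrix F (Fintype.card K) r d z g).charpoly.coeff i).natDegree ≤
      (r - i) * d := by
  by_cases h0 : (frobeniusMatrix F (Fintype.card K) r d z g).charpoly.coeff i = 0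
  · simp [h0]
  have h := natDegree_nsmul_le_of_mem_polynomialWeight
    (charpoly_coeff_mem_of_mem_matrixWeight (frobeniusMatrix_mem_motiveWeight K r z g d) i) h0
  simp only [nsmul_eq_mul, Fintype.card_fin] at h
  zify [hi]
  linarith

theorem det_frobeniusMatrix [FiniteDimensional K F] (hr : 1 ≤ r) :
    (frobeniusMatrix F (Fintype.card K) r (Module.finrank K F) z g).det =
      C ((-1) ^ ((r - 1) * Module.finrank K F) * (algebraMap K F (Algebra.norm K (g r)))⁻¹) *
        (minpoly K z ^ (Module.finrank K F / (minpoly K z).natDegree)).map (algebraMap K F) := by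
  have : Finite F := Module.finite_of_finite K
  rw [frobeniusMatrix_eq_twistedPow, ← Matrix.coe_detMonoidHom, map_twistedPow_eq_prod]
  simp only [iterate_coeffFrobenius_motiveMatrix, Matrix.coe_detMonoidHom, det_motiveMatrix hr]
  rw [Finset.prod_mul_distrib, prod_range_X_sub_C_pow_eq_map_minpoly_pow,
    FiniteField.algebraMap_norm_eq_prod_pow, Nat.card_eq_fintype_card, ← map_prod,
    Finset.prod_mul_distrib, Finset.prod_const, Finset.card_range, Finset.prod_inv_distrib, pow_mul]

end FrobeniusMatrix

theorem charpoly_coeff_zero_eq_neg_one_pow_mul_det {R n : Type*} [CommRing R] [Fintype n]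
    [DecidableEq n] (M : Matrix n n R) :
    M.charpoly.coeff 0 = (-1) ^ Fintype.card n * M.det := by
  simp [Matrix.det_eq_sign_charpoly_coeff, ← mul_assoc, ← mul_pow]

theorem neg_one_zpow_mul_sub_sub {R : Type*} [Field R] {r : ℕ} (hr : 1 ≤ r) (d : ℕ) :
    (-1 : R) ^ ((r : ℤ) * d - d - r) = (-1) ^ r * (-1) ^ ((r - 1) * d) := by
  have hexp : (r : ℤ) * d - d - r = ((r - 1) * d : ℕ) - (r : ℕ) := by
    push_cast [hr]
    ring
  rw [hexp, zpow_sub₀ (by simp), zpow_natCast, zpow_natCast, div_eq_mul_inv, ← inv_pow, inv_neg_one,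
    mul_comm]

/-- Bounds on the characteristic polynomial `χ(X) = X^r + a_{r−1}X^{r−1} + ⋯ + a_0` of the
Frobenius endomorphism of a rank-`r` Drinfeld module over a finite `A`-field `(F, z)` with
`[F : 𝔽_q] = d`: (1) every `a_i` comes from `𝔽_q[T]`; (2) `deg_T a_i ≤ (r−i)·d/r` for
`0 < i < r`; (3) `a_0 = (−1)^{rd−d−r}·p^{d/m}/N_{F/𝔽_q}(g_r)` where `p` is the minimal
polynomial of `z` over `𝔽_q` and `m = deg p`. -/
theorem frobenius_charpoly_coeff_bounds
    (Fq : Type*) [Field Fq] [Fintype Fq] (q : ℕ) (hq : Fintype.card Fq = q)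
    (F : Type*) [Field F] [Algebra Fq F] [FiniteDimensional Fq F]
    (d : ℕ) (hd : Module.finrank Fq F = d)
    (z : F) (r : ℕ) (hr : 1 ≤ r) (g : ℕ → F) (hgr : g r ≠ 0)
    (p : Polynomial Fq) (hp : p = minpoly Fq z) (m : ℕ) (hm : m = p.natDegree) :
    let χ := (frobeniusMatrix F q r d z g).charpoly
    (∀ i : ℕ, ∃ b : Polynomial Fq, Polynomial.map (algebraMap Fq F) b = χ.coeff i) ∧
    (∀ i : ℕ, 0 < i → i < r → r * (χ.coeff i).natDegree ≤ (r - i) * d) ∧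
    (χ.coeff 0 =
      Polynomial.C (((-1 : F) ^ ((r : ℤ) * d - d - r)) *
          (algebraMap Fq F (Algebra.norm Fq (g r)))⁻¹) *
        Polynomial.map (algebraMap Fq F) (p ^ (d / m))) := by
  subst hq hd hp hm
  refine ⟨charpoly_frobeniusMatrix_coeff_mem_lifts Fq r z g,
    fun i _ hi => natDegree_charpoly_frobeniusMatrix_coeff_le Fq r z g _ hi.le, ?_⟩
  rw [charpoly_coeff_zero_eq_neg_one_pow_mul_det, det_frobeniusMatrix Fq r z g hr, Fintype.card_fin,
    neg_one_zpow_mul_sub_sub hr, mul_assoc ((-1 : F) ^ r), C_mul (a := (-1) ^ r), mul_assoc]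
  simp
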